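/- arXiv:2402.07666 — 4 statements merged into one kernel-verified Lean document; each statement's English description precedes it below -/
import Mathlib

section
/- Two d-DOPs P and P' intersect (i.e., P ∩ P' ≠ ∅ as open sets) if and only if p_i(P) > −p_{i+d}(P') for every i ∈ {1,…,2d}. -/
open scoped Classical

noncomputable section

/-- A point of the Euclidean plane. -/
abbrev Pt : Type := ℝ × ℝ

/-- Dot product in the plane. -/
def dot2 (a b : Pt) : ℝ := a.1 * b.1 + a.2 * b.2

/-- Clockwise orthogonal rotation `v^⊥` of a vector. -/
def perp2 (w : Pt) : Pt := (w.2, -w.1)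

/-- Cross product (determinant) of two plane vectors. -/
def cross2 (a b : Pt) : ℝ := a.1 * b.2 - a.2 * b.1

/-- The hypotheses on the family of direction-defining vectors `v₁, …, v_d`
(extended to all integer indices by `v_{i+d} = -v_i`, hence `2d`-periodicity):
`d ≥ 2`, `v 1 = (0,1)`, pairwise linear independence of `v₁, …, v_d`,
`v₂, …, v_d` have negative first coordinate, and `v₂, …, v_d`
are ordered by strictly decreasing slope. -/
def DirOK (d : ℕ) (v : ℤ → Pt) : Prop :=
  2 ≤ d ∧
  v 1 = ((0 : ℝ), (1 : ℝ)) ∧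
  (∀ i : ℤ, v (i + (d : ℤ)) = -v i) ∧
  (∀ i j : ℤ, 1 ≤ i → i < j → j ≤ (d : ℤ) → cross2 (v i) (v j) ≠ 0) ∧
  (∀ i : ℤ, 2 ≤ i → i ≤ (d : ℤ) → (v i).1 < 0) ∧
  (∀ i j : ℤ, 2 ≤ i → i < j → j ≤ (d : ℤ) → (v j).2 / (v j).1 < (v i).2 / (v i).1)

/-- The open polygon `P = {x : ⟨x, v_i^⊥⟩ < p_i for all i ∈ {1,…,2d}}`. -/
def DOPset (d : ℕ) (v : ℤ → Pt) (p : ℤ → ℝ) : Set Pt :=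
  {x : Pt | ∀ i ∈ Finset.Icc (1 : ℤ) (2 * (d : ℤ)), dot2 x (perp2 (v i)) < p i}

/-- The edge `e_i(P) = cl(P) ∩ {x : ⟨x, v_i^⊥⟩ = p_i}`. -/
def edgeOf (d : ℕ) (v : ℤ → Pt) (p : ℤ → ℝ) (i : ℤ) : Set Pt :=
  closure (DOPset d v p) ∩ {x : Pt | dot2 x (perp2 (v i)) = p i}

/-- `p` (a `2d`-periodic family of offsets) defines a `d`-DOP: the corresponding open
set is nonempty and bounded, and every constraint is tight (each edge is nonempty). -/
def IsDOP (d : ℕ) (v : ℤ → Pt) (p : ℤ → ℝ) : Prop :=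
  (DOPset d v p).Nonempty ∧
  Bornology.IsBounded (DOPset d v p) ∧
  (∀ i : ℤ, p (i + 2 * (d : ℤ)) = p i) ∧
  ∀ i ∈ Finset.Icc (1 : ℤ) (2 * (d : ℤ)), (edgeOf d v p i).Nonempty

/-- `te` and `he` are the tail and the head of the (possibly degenerate) segment `e`,
oriented along `v i`:  `e = [te, he]` and `he - te` is a nonnegative multiple of `v i`. -/
def IsTH (v : ℤ → Pt) (i : ℤ) (e : Set Pt) (te he : Pt) : Prop :=
  e = segment ℝ te he ∧ ∃ c : ℝ, 0 ≤ c ∧ he - te = c • v i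

/-- The pair (tail, head) of the edge `e_i(P)` (chosen by the characterizing property). -/
def THpair (d : ℕ) (v : ℤ → Pt) (p : ℤ → ℝ) (i : ℤ) : Pt × Pt :=
  if h : ∃ th : Pt × Pt, IsTH v i (edgeOf d v p i) th.1 th.2 then h.choose
  else (0 : Pt × Pt)

/-- The tail `t(e_i(P))` of the edge `e_i(P)`. -/
def tlPt (d : ℕ) (v : ℤ → Pt) (p : ℤ → ℝ) (i : ℤ) : Pt := (THpair d v p i).1

/-- The head `h(e_i(P))` of the edge `e_i(P)`. -/
def hdPt (d : ℕ) (v : ℤ → Pt) (p : ℤ → ℝ) (i : ℤ) : Pt := (THpair d v p i).2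

/-- The relative interior of the edge `e_i(P)`: the segment minus its two endpoints. -/
def relintE (d : ℕ) (v : ℤ → Pt) (p : ℤ → ℝ) (i : ℤ) : Set Pt :=
  segment ℝ (tlPt d v p i) (hdPt d v p i) \ {tlPt d v p i, hdPt d v p i}

/-- A family of `d`-DOPs is independent: members are pairwise distinct (as sets)
and no two of them meet as open sets. -/
def Indep (d : ℕ) (v : ℤ → Pt) (OPT : Set (ℤ → ℝ)) : Prop :=
  ∀ p ∈ OPT, ∀ q ∈ OPT, p ≠ q →
    DOPset d v p ≠ DOPset d v q ∧ DOPset d v p ∩ DOPset d v q = ∅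

/-- `P` sees `P'` with respect to the charging option `(v_i, a)`, where the Boolean
`a = true` stands for the option `h` (head) and `a = false` for `t` (tail):
the edge `e = e_i(P)` is non-degenerate and `(¬a)(e') ∈ relint(e) ∪ {a(e)}`
where `e' = e_{i+d}(P')`. -/
def SeesOpt (d : ℕ) (v : ℤ → Pt) (p p' : ℤ → ℝ) (i : ℤ) (a : Bool) : Prop :=
  tlPt d v p i ≠ hdPt d v p i ∧
  (if a then tlPt d v p' (i + (d : ℤ)) else hdPt d v p' (i + (d : ℤ))) ∈
    relintE d v p i ∪ {if a then hdPt d v p i else tlPt d v p i}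

/-- `P ∈ OPT` is accountable with respect to the charging option `(v_i, a)`. -/
def Accountable (d : ℕ) (v : ℤ → Pt) (OPT : Set (ℤ → ℝ)) (p : ℤ → ℝ) (i : ℤ)
    (a : Bool) : Prop :=
  ∃ p' ∈ OPT, SeesOpt d v p p' i a

/-- Condition (E4): for every `P ∈ OPT` and every non-degenerate edge `e` of `P`,
`relint(e)` meets the boundary of another polygon of `OPT` or the boundary of `C*`. -/
def E4cond (d : ℕ) (v : ℤ → Pt) (OPT : Set (ℤ → ℝ)) (Cstar : Set Pt) : Prop :=
  ∀ p ∈ OPT, ∀ i ∈ Finset.Icc (1 : ℤ) (2 * (d : ℤ)),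
    tlPt d v p i ≠ hdPt d v p i →
    (∃ q ∈ OPT, DOPset d v q ≠ DOPset d v p ∧
      (relintE d v p i ∩ frontier (DOPset d v q)).Nonempty) ∨
    (relintE d v p i ∩ frontier Cstar).Nonempty

/-- A (closed) parallelogram in the plane. -/
def IsParallelogram (C : Set Pt) : Prop :=
  ∃ a u w : Pt, cross2 u w ≠ 0 ∧
    C = (fun st : ℝ × ℝ => a + st.1 • u + st.2 • w) ''
      {st : ℝ × ℝ | st.1 ∈ Set.Icc (0 : ℝ) 1 ∧ st.2 ∈ Set.Icc (0 : ℝ) 1}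

/-- `P` is a corner polygon in `C*`: all of its edges except exactly one are
contained in `∂C*`. -/
def CornerPoly (d : ℕ) (v : ℤ → Pt) (p : ℤ → ℝ) (Cstar : Set Pt) : Prop :=
  ∃ i ∈ Finset.Icc (1 : ℤ) (2 * (d : ℤ)),
    ¬ edgeOf d v p i ⊆ frontier Cstar ∧
    ∀ j ∈ Finset.Icc (1 : ℤ) (2 * (d : ℤ)), j ≠ i → edgeOf d v p j ⊆ frontier Cstar

def Feas (S : Finset ℤ) (v : ℤ → Pt) (p : ℤ → ℝ) (x : Pt) : Prop :=
  ∀ j ∈ S, cross2 x (v j) ≤ p j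

lemma dot_perp (x w : Pt) : dot2 x (perp2 w) = cross2 x w := by
  simp only [dot2, perp2, cross2]; ring

lemma vertex_ex (S : Finset ℤ) (v : ℤ → Pt) (p : ℤ → ℝ) (i k : ℤ) (hi : i ∈ S) (hk : k ∈ S)
    (hD : 0 < cross2 (v i) (v k))
    (hadj : ∀ j ∈ S, cross2 (v j) (v k) ≤ 0 ∨ cross2 (v i) (v j) ≤ 0)
    (ht : ∀ i ∈ S, ∃ y, cross2 y (v i) = p i ∧ Feas S v p y) :
    ∃ x, cross2 x (v i) = p i ∧ cross2 x (v k) = p k ∧ Feas S v p x := by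
  set D := cross2 (v i) (v k) with hDdef
  have key : ∀ z w : Pt, D * cross2 z w =
      cross2 w (v k) * cross2 z (v i) + cross2 (v i) w * cross2 z (v k) := by
    intro z w; simp only [hDdef, cross2]; ring
  have e1 : cross2 ((p k / D) • v i - (p i / D) • v k) (v i) = p i := by
    have : cross2 ((p k / D) • v i - (p i / D) • v k) (v i) = (p i / D) * D := by
      simp only [hDdef, cross2, Prod.fst_sub, Prod.snd_sub, Prod.smul_fst, Prod.smul_snd,
        smul_eq_mul]; ring
    rw [this]; field_simp
  have e2 : cross2 ((p k / D) • v i - (p i / D) • v k) (v k) = p k := by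
    have : cross2 ((p k / D) • v i - (p i / D) • v k) (v k) = (p k / D) * D := by
      simp only [hDdef, cross2, Prod.fst_sub, Prod.snd_sub, Prod.smul_fst, Prod.smul_snd,
        smul_eq_mul]; ring
    rw [this]; field_simp
  refine ⟨_, e1, e2, ?_⟩
  intro j hj
  have kx := key ((p k / D) • v i - (p i / D) • v k) (v j)
  rw [e1, e2] at kx
  refine le_of_mul_le_mul_left ?_ hD
  rw [kx]
  rcases hadj j hj with h | h
  · obtain ⟨z, hz, hf⟩ := ht k hk
    have kz := key z (v j)
    have h1 := hf j hj
    have h2 := hf i hi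
    rw [hz] at kz
    have h3 := mul_le_mul_of_nonpos_left h2 h
    have h4 := mul_le_mul_of_nonneg_left h1 hD.le
    linarith
  · obtain ⟨z, hz, hf⟩ := ht i hi
    have kz := key z (v j)
    have h1 := hf j hj
    have h2 := hf k hk
    rw [hz] at kz
    have h3 := mul_le_mul_of_nonpos_left h2 h
    have h4 := mul_le_mul_of_nonneg_left h1 hD.le
    linarith

lemma closest_right (S : Finset ℤ) (v : ℤ → Pt) (w : Pt) (hw : w ≠ 0)
    (hne : ∃ j ∈ S, 0 < cross2 (v j) w) :
    ∃ i ∈ S, 0 < cross2 (v i) w ∧ ∀ j ∈ S, 0 < cross2 (v j) w → cross2 (v i) (v j) ≤ 0 := by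
  obtain ⟨j0, hj0, hj0'⟩ := hne
  obtain ⟨i, hi, hmax⟩ := Finset.exists_max_image (S.filter fun j => 0 < cross2 (v j) w)
    (fun j => dot2 (v j) w / cross2 (v j) w) ⟨j0, by simp [hj0, hj0']⟩
  rw [Finset.mem_filter] at hi
  refine ⟨i, hi.1, hi.2, fun j hj hj' => ?_⟩
  have h := hmax j (by simp [hj, hj'])
  rw [div_le_div_iff₀ hj' hi.2] at h
  have hn : 0 < dot2 w w := by
    have : w.1 ≠ 0 ∨ w.2 ≠ 0 := by
      by_contra hc; push Not at hc
      exact hw (Prod.ext hc.1 hc.2)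
    simp only [dot2]
    rcases this with h | h
    · nlinarith [mul_self_pos.mpr h, mul_self_nonneg w.2]
    · nlinarith [mul_self_pos.mpr h, mul_self_nonneg w.1]
  have id1 : dot2 w w * cross2 (v i) (v j) =
      dot2 (v j) w * cross2 (v i) w - dot2 (v i) w * cross2 (v j) w := by
    simp only [dot2, cross2]; ring
  by_contra hc
  push Not at hc
  have := mul_pos hn hc
  linarith

lemma adj_ex (S : Finset ℤ) (v : ℤ → Pt) (w : Pt) (hw : w ≠ 0)
    (hneg : ∀ j ∈ S, ∃ j' ∈ S, v j' = - v j)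
    (hpar : ∀ j ∈ S, cross2 (v j) w ≠ 0)
    (hsp : ∃ a ∈ S, ∃ b ∈ S, cross2 (v a) (v b) ≠ 0) :
    ∃ i ∈ S, ∃ k ∈ S, 0 < cross2 (v i) w ∧ 0 < cross2 w (v k) ∧ 0 < cross2 (v i) (v k) ∧
      ∀ j ∈ S, cross2 (v j) (v k) ≤ 0 ∨ cross2 (v i) (v j) ≤ 0 := by
  have cneg : ∀ a b : Pt, cross2 (-a) b = - cross2 a b := by
    intro a b; simp only [cross2, Prod.fst_neg, Prod.snd_neg]; ring
  have cnegr : ∀ a b : Pt, cross2 a (-b) = - cross2 a b := by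
    intro a b; simp only [cross2, Prod.fst_neg, Prod.snd_neg]; ring
  have csw : ∀ a b : Pt, cross2 a b = - cross2 b a := by
    intro a b; simp only [cross2]; ring
  obtain ⟨a, ha, b, hb, hab⟩ := hsp
  have hR : ∃ j ∈ S, 0 < cross2 (v j) w := by
    rcases lt_or_gt_of_ne (hpar a ha) with h | h
    · obtain ⟨a', ha', e⟩ := hneg a ha
      exact ⟨a', ha', by rw [e, cneg]; linarith⟩
    · exact ⟨a, ha, h⟩
  have hL : ∃ j ∈ S, 0 < cross2 (v j) (-w) := by
    obtain ⟨j, hj, h⟩ := hR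
    obtain ⟨a', ha', e⟩ := hneg j hj
    exact ⟨a', ha', by rw [e, cneg, cnegr]; linarith⟩
  obtain ⟨i, hi, hiw, hi'⟩ := closest_right S v w hw hR
  obtain ⟨k, hk, hkw, hk'⟩ : ∃ k ∈ S, 0 < cross2 w (v k) ∧
      ∀ j ∈ S, 0 < cross2 w (v j) → cross2 (v j) (v k) ≤ 0 := by
    have refl : ∀ x y : Pt, cross2 (-x.1, x.2) (-y.1, y.2) = cross2 y x := by
      intro x y; simp only [cross2]; ring
    obtain ⟨k, hk, h1, h2⟩ := closest_right S (fun j => (-(v j).1, (v j).2)) (-w.1, w.2)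
      (by
        intro h
        rw [Prod.mk_eq_zero] at h
        exact hw (Prod.ext (by simpa using h.1) h.2))
      (by
        obtain ⟨j, hj, h⟩ := hL
        refine ⟨j, hj, ?_⟩
        rw [refl, csw, ← cnegr]; exact h)
    simp only [refl] at h1 h2
    exact ⟨k, hk, h1, h2⟩
  have hfin : ∀ j ∈ S, cross2 (v j) (v k) ≤ 0 ∨ cross2 (v i) (v j) ≤ 0 := by
    intro j hj
    rcases lt_or_gt_of_ne (hpar j hj) with h | h
    · left; exact hk' j hj (by rw [csw]; linarith)
    · right; exact hi' j hj h
  refine ⟨i, hi, k, hk, hiw, hkw, ?_, hfin⟩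
  have hD0 : 0 ≤ cross2 (v i) (v k) := by
    obtain ⟨i', hi1, e⟩ := hneg i hi
    have := hk' i' hi1 (by rw [e, cnegr, csw]; linarith)
    rw [e, cneg] at this; linarith
  rcases hD0.lt_or_eq with h | h
  · exact h
  exfalso
  have par : ∀ j ∈ S, 0 < cross2 (v j) w → cross2 (v i) (v j) = 0 := by
    intro j hj hjw
    have h1 := hi' j hj hjw
    obtain ⟨j', hj1, e⟩ := hneg j hj
    have h2 := hk' j' hj1 (by rw [e, cnegr, csw]; linarith)
    rw [e, cneg] at h2
    have id1 : cross2 (v i) w * cross2 (v j) (v k) =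
        cross2 (v j) w * cross2 (v i) (v k) + cross2 w (v k) * cross2 (v i) (v j) := by
      simp only [cross2]; ring
    rw [← h, mul_zero, zero_add] at id1
    by_contra hc
    have h3 : cross2 (v i) (v j) < 0 := lt_of_le_of_ne h1 hc
    have h4 := mul_neg_of_pos_of_neg hkw h3
    have h5 := mul_nonneg hiw.le (show 0 ≤ cross2 (v j) (v k) by linarith)
    linarith
  have par' : ∀ j ∈ S, cross2 (v i) (v j) = 0 := by
    intro j hj
    rcases lt_or_gt_of_ne (hpar j hj) with h | h
    · obtain ⟨j', hj1, e⟩ := hneg j hj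
      have := par j' hj1 (by rw [e, cneg]; linarith)
      rw [e, cnegr] at this; linarith
    · exact par j hj h
  have id2 : cross2 (v i) w * cross2 (v a) (v b) =
      cross2 (v a) w * cross2 (v i) (v b) - cross2 (v b) w * cross2 (v i) (v a) := by
    simp only [cross2]; ring
  rw [par' a ha, par' b hb] at id2
  have : cross2 (v i) w * cross2 (v a) (v b) = 0 := by rw [id2]; ring
  rcases mul_eq_zero.mp this with h | h
  · linarith
  · exact hab h

lemma cross_cont (w : Pt) : Continuous fun x : Pt => cross2 x w := by
  unfold cross2; fun_prop

lemma dop_open (d : ℕ) (v : ℤ → Pt) (p : ℤ → ℝ) : IsOpen (DOPset d v p) := by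
  have : DOPset d v p =
      ⋂ i ∈ Finset.Icc (1 : ℤ) (2 * (d : ℤ)), {x : Pt | cross2 x (v i) < p i} := by
    ext x; simp [DOPset, dot_perp]
  rw [this]
  exact isOpen_biInter_finset fun i _ => isOpen_lt (cross_cont _) continuous_const

lemma cross_comb (a b : ℝ) (x y w : Pt) :
    cross2 (a • x + b • y) w = a * cross2 x w + b * cross2 y w := by
  simp only [cross2, Prod.fst_add, Prod.snd_add, Prod.smul_fst, Prod.smul_snd, smul_eq_mul]; ring

lemma dop_convex (d : ℕ) (v : ℤ → Pt) (p : ℤ → ℝ) : Convex ℝ (DOPset d v p) := by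
  intro x hx y hy a b ha hb hab i hi
  have h1 := hx i hi
  have h2 := hy i hi
  rw [dot_perp] at *
  rw [cross_comb]
  have e : p i = a * p i + b * p i := by rw [← add_mul, hab, one_mul]
  rcases ha.eq_or_lt with h | h
  · have hb1 : b = 1 := by linarith
    subst hb1; rw [← h]; linarith
  · have := mul_lt_mul_of_pos_left h1 h
    have := mul_le_mul_of_nonneg_left h2.le hb
    linarith

lemma tight_pts (d : ℕ) (v : ℤ → Pt) (p : ℤ → ℝ) (hp : IsDOP d v p) :
    ∀ i ∈ Finset.Icc (1 : ℤ) (2 * (d : ℤ)), ∃ y, cross2 y (v i) = p i ∧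
      Feas (Finset.Icc (1 : ℤ) (2 * (d : ℤ))) v p y := by
  intro i hi
  obtain ⟨y, hy, hy'⟩ := hp.2.2.2 i hi
  refine ⟨y, by rw [← dot_perp]; exact hy', fun j hj => ?_⟩
  have hc : IsClosed {x : Pt | cross2 x (v j) ≤ p j} :=
    isClosed_le (cross_cont _) continuous_const
  exact closure_minimal (fun x hx => by
    have := hx j hj
    rw [dot_perp] at this
    exact this.le) hc hy

lemma feas_le (d : ℕ) (v : ℤ → Pt) (p : ℤ → ℝ) (hne : (DOPset d v p).Nonempty) (w : Pt) (u : ℝ)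
    (hu : ∀ a ∈ DOPset d v p, cross2 a w ≤ u) (x : Pt)
    (hx : Feas (Finset.Icc (1 : ℤ) (2 * (d : ℤ))) v p x) : cross2 x w ≤ u := by
  obtain ⟨z, hz⟩ := hne
  by_contra hc
  push Not at hc
  have hmem : ∀ t : ℝ, 0 < t → t ≤ 1 → t • z + (1 - t) • x ∈ DOPset d v p := by
    intro t ht ht1 j hj
    have h1 := hz j hj
    rw [dot_perp] at *
    rw [cross_comb]
    have := mul_lt_mul_of_pos_left h1 ht
    have := mul_le_mul_of_nonneg_left (hx j hj) (show 0 ≤ 1 - t by linarith)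
    linarith
  have hzu := hu z hz
  set A := cross2 x w - u with hA
  set B := cross2 x w - cross2 z w with hB
  have hA0 : 0 < A := by linarith
  have hAB : A ≤ B := by linarith
  have hB0 : 0 < B := by linarith
  have ht : 0 < A / (2 * B) := by positivity
  have ht1 : A / (2 * B) ≤ 1 := by rw [div_le_one (by positivity)]; linarith
  have h := hu _ (hmem _ ht ht1)
  rw [cross_comb] at h
  have e : A / (2 * B) * B = A / 2 := by field_simp
  rw [hB] at e
  rw [← hB] at e
  have : A / (2 * B) * cross2 z w + (1 - A / (2 * B)) * cross2 x w
      = cross2 x w - A / (2 * B) * B := by rw [hB]; ring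
  rw [this, e] at h
  linarith

/-- Two `d`-DOPs `P` and `P'` intersect (as open sets) if and only if
`p_i(P) > -p_{i+d}(P')` for every `i ∈ {1,…,2d}`. -/
theorem stmt0 (d : ℕ) (v : ℤ → Pt) (hv : DirOK d v) (p q : ℤ → ℝ)
    (hp : IsDOP d v p) (hq : IsDOP d v q) :
    (DOPset d v p ∩ DOPset d v q).Nonempty ↔
      ∀ i ∈ Finset.Icc (1 : ℤ) (2 * (d : ℤ)), -q (i + (d : ℤ)) < p i := by
  obtain ⟨hd, hv1, hvd, hcr, -, -⟩ := hv
  have cneg : ∀ a b : Pt, cross2 (-a) b = - cross2 a b := by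
    intro a b; simp only [cross2, Prod.fst_neg, Prod.snd_neg]; ring
  have cnegr : ∀ a b : Pt, cross2 a (-b) = - cross2 a b := by
    intro a b; simp only [cross2, Prod.fst_neg, Prod.snd_neg]; ring
  have hqper := hq.2.2.1
  have hsh : ∀ i ∈ Finset.Icc (1 : ℤ) (2 * (d : ℤ)), ∃ j ∈ Finset.Icc (1 : ℤ) (2 * (d : ℤ)),
      v j = - v i ∧ q j = q (i + d) ∧ q (j + d) = q i := by
    intro i hi
    rw [Finset.mem_Icc] at hi
    by_cases h : i ≤ d
    · refine ⟨i + d, by rw [Finset.mem_Icc]; omega, hvd i, rfl, ?_⟩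
      rw [← hqper i]; congr 1; ring
    · refine ⟨i - d, by rw [Finset.mem_Icc]; omega, ?_, ?_, ?_⟩
      · have := hvd (i - d)
        rw [sub_add_cancel] at this
        rw [this, neg_neg]
      · rw [← hqper (i - d)]; congr 1; ring
      · rw [sub_add_cancel]
  constructor
  · rintro ⟨x, hx1, hx2⟩ i hi
    obtain ⟨j, hj, e1, e2, -⟩ := hsh i hi
    have h1 := hx1 i hi
    have h2 := hx2 j hj
    rw [dot_perp] at h1 h2
    rw [e1, cnegr, e2] at h2
    linarith
  intro hpq
  by_contra hemp
  rw [Set.not_nonempty_iff_eq_empty, ← Set.disjoint_iff_inter_eq_empty] at hemp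
  obtain ⟨f, u, hf1, hf2⟩ := geometric_hahn_banach_open_open (dop_convex d v p) (dop_open d v p)
    (dop_convex d v q) (dop_open d v q) hemp
  obtain ⟨w, hw⟩ : ∃ w : Pt, ∀ x, f x = cross2 x w := by
    refine ⟨(-f (0, 1), f (1, 0)), fun x => ?_⟩
    have : x = x.1 • ((1, 0) : Pt) + x.2 • ((0, 1) : Pt) := by
      ext <;> simp
    conv_lhs => rw [this]
    rw [map_add, map_smul, map_smul]
    simp only [cross2, smul_eq_mul]; ring
  have hw0 : w ≠ 0 := by
    rintro rfl
    obtain ⟨a, ha⟩ := hp.1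
    obtain ⟨b, hb⟩ := hq.1
    have h1 := hf1 a ha
    have h2 := hf2 b hb
    rw [hw] at h1 h2
    simp [cross2] at h1 h2
    linarith
  have hP := feas_le d v p hp.1 w u (fun a ha => by rw [← hw]; exact (hf1 a ha).le)
  have hQ : ∀ x, Feas (Finset.Icc (1 : ℤ) (2 * (d : ℤ))) v (fun i => q (i + d)) x →
      cross2 x w ≤ -u := by
    intro x hx
    have := feas_le d v q hq.1 (-w) (-u) (fun a ha => by
      have := hf2 a ha
      rw [hw] at this; rw [cnegr]; linarith) (-x) (by
      intro j hj
      obtain ⟨j', hj', e1, -, e3⟩ := hsh j hj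
      have := hx j' hj'
      simp only [e1, e3] at this
      rw [cnegr] at this
      rw [cneg]; exact this)
    rw [cneg, cnegr] at this
    linarith
  have tP := tight_pts d v p hp
  have tQ : ∀ i ∈ Finset.Icc (1 : ℤ) (2 * (d : ℤ)), ∃ y, cross2 y (v i) = (fun i => q (i + d)) i ∧
      Feas (Finset.Icc (1 : ℤ) (2 * (d : ℤ))) v (fun i => q (i + d)) y := by
    intro i hi
    obtain ⟨i', hi', e1, e2, -⟩ := hsh i hi
    obtain ⟨y, hy, hy'⟩ := tight_pts d v q hq i' hi'
    refine ⟨-y, ?_, ?_⟩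
    · rw [e1, cnegr] at hy
      rw [cneg, hy, e2]
    · intro j hj
      obtain ⟨j', hj', e1, e2, -⟩ := hsh j hj
      have := hy' j' hj'
      rw [e1, cnegr, e2] at this
      rw [cneg]; exact this
  have hneg : ∀ j ∈ Finset.Icc (1 : ℤ) (2 * (d : ℤ)), ∃ j' ∈ Finset.Icc (1 : ℤ) (2 * (d : ℤ)),
      v j' = - v j := fun j hj => by
    obtain ⟨j', h1, h2, -⟩ := hsh j hj
    exact ⟨j', h1, h2⟩
  have hpos : ∀ i ∈ Finset.Icc (1 : ℤ) (2 * (d : ℤ)), ∀ c : ℝ, 0 < c → w = c • v i → False := by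
    intro i hi c hc e
    obtain ⟨y, hy, hy'⟩ := tP i hi
    obtain ⟨z, hz, hz'⟩ := tQ i hi
    have h1 := hP y hy'
    have h2 := hQ z hz'
    have cs : ∀ x : Pt, cross2 x w = c * cross2 x (v i) := by
      intro x; rw [e]; simp only [cross2, Prod.smul_fst, Prod.smul_snd, smul_eq_mul]; ring
    rw [cs, hy] at h1
    rw [cs, hz] at h2
    have := mul_pos hc (show 0 < p i + q (i + d) by linarith [hpq i hi])
    simp only at h2
    linarith
  have hnz : ∀ i : ℤ, 1 ≤ i → i ≤ d → v i ≠ 0 := by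
    intro i h1 h2 h0
    by_cases h : i < d
    · exact hcr i d h1 h le_rfl (by rw [h0]; simp [cross2])
    · exact hcr 1 i le_rfl (by omega) h2 (by rw [h0]; simp [cross2])
  have hnz' : ∀ i ∈ Finset.Icc (1 : ℤ) (2 * (d : ℤ)), v i ≠ 0 := by
    intro i hi
    rw [Finset.mem_Icc] at hi
    by_cases h : i ≤ d
    · exact hnz i hi.1 h
    · have := hvd (i - d)
      rw [sub_add_cancel] at this
      rw [this]
      exact neg_ne_zero.mpr (hnz _ (by omega) (by omega))
  have hpar : ∀ j ∈ Finset.Icc (1 : ℤ) (2 * (d : ℤ)), cross2 (v j) w ≠ 0 := by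
    intro j hj h0
    obtain ⟨c, hc⟩ : ∃ c : ℝ, w = c • v j := by
      have hn : v j ≠ 0 := hnz' j hj
      have h' : (v j).1 ≠ 0 ∨ (v j).2 ≠ 0 := by
        by_contra hc; push Not at hc
        exact hn (Prod.ext hc.1 hc.2)
      unfold cross2 at h0
      rcases h' with h | h
      · refine ⟨w.1 / (v j).1, Prod.ext ?_ ?_⟩
        · simp [h]
        · simp only [Prod.smul_snd, smul_eq_mul]; field_simp; linarith
      · refine ⟨w.2 / (v j).2, Prod.ext ?_ ?_⟩
        · simp only [Prod.smul_fst, smul_eq_mul]; field_simp; linarith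
        · simp [h]
    rcases lt_trichotomy c 0 with h | h | h
    · obtain ⟨j', hj', e⟩ := hneg j hj
      exact hpos j' hj' (-c) (by linarith) (by rw [e, hc]; simp)
    · exact hw0 (by rw [hc, h, zero_smul])
    · exact hpos j hj c h hc
  obtain ⟨i, hi, k, hk, hiw, hwk, hD, hadj⟩ := adj_ex _ v w hw0 hneg hpar
    ⟨1, by rw [Finset.mem_Icc]; omega, 2, by rw [Finset.mem_Icc]; omega,
      hcr 1 2 le_rfl (by norm_num) (by exact_mod_cast hd)⟩
  obtain ⟨x, hx1, hx2, hx⟩ := vertex_ex _ v p i k hi hk hD hadj tP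
  obtain ⟨y, hy1, hy2, hy⟩ := vertex_ex _ v _ i k hi hk hD hadj tQ
  have h1 := hP x hx
  have h2 := hQ y hy
  have key : ∀ z : Pt, cross2 (v i) (v k) * cross2 z w =
      cross2 w (v k) * cross2 z (v i) + cross2 (v i) w * cross2 z (v k) := by
    intro z; simp only [cross2]; ring
  have kx := key x
  have ky := key y
  rw [hx1, hx2] at kx
  rw [hy1, hy2] at ky
  have a1 := mul_pos hwk (show 0 < p i + q (i + d) by linarith [hpq i hi])
  have a2 := mul_pos hiw (show 0 < p k + q (k + d) by linarith [hpq k hk])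
  have a3 := mul_le_mul_of_nonneg_left (show cross2 x w + cross2 y w ≤ 0 by linarith) hD.le
  linarith
end
end

section
/- Let P₁ and P₂ be d-DOPs with P₁ ≠ P₂ and let i, j ∈ {1,…,2d} with j ≢ i + d (mod 2d). If relint(e_i(P₁)) ∩ relint(e_j(P₂)) ≠ ∅, then P₁ and P₂ intersect. -/
open scoped Classical

noncomputable section

lemma aux_range (d : ℕ) (v : ℤ → Pt) (hv : DirOK d v) (i : ℤ)
    (hi : i ∈ Finset.Icc (1 : ℤ) (2 * (d : ℤ))) :
    ∃ r : ℤ, 1 ≤ r ∧ r ≤ d ∧ ((i = r ∧ v i = v r) ∨ (i = r + d ∧ v i = - v r)) := by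
  rw [Finset.mem_Icc] at hi
  by_cases h : i ≤ d
  · exact ⟨i, hi.1, h, Or.inl ⟨rfl, rfl⟩⟩
  · refine ⟨i - d, by omega, by omega, Or.inr ⟨by ring, ?_⟩⟩
    have := hv.2.2.1 (i - d)
    rwa [sub_add_cancel] at this

lemma aux_cross (d : ℕ) (v : ℤ → Pt) (hv : DirOK d v) (i k : ℤ)
    (hi : i ∈ Finset.Icc (1 : ℤ) (2 * (d : ℤ)))
    (hk : k ∈ Finset.Icc (1 : ℤ) (2 * (d : ℤ)))
    (h0 : k ≠ i) (h1 : k ≠ i + d) (h2 : i ≠ k + d) : cross2 (v i) (v k) ≠ 0 := by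
  obtain ⟨r, hr1, hr2, hr⟩ := aux_range d v hv i hi
  obtain ⟨s, hs1, hs2, hs⟩ := aux_range d v hv k hk
  have hrs : r ≠ s := by omega
  have key : cross2 (v r) (v s) ≠ 0 := by
    rcases lt_or_gt_of_ne hrs with h | h
    · exact hv.2.2.2.1 r s hr1 h hs2
    · have := hv.2.2.2.1 s r hs1 h hr2
      intro h'
      apply this
      unfold cross2 at *
      linarith
  intro h'
  apply key
  rcases hr with ⟨_, hr⟩ | ⟨_, hr⟩ <;> rcases hs with ⟨_, hs⟩ | ⟨_, hs⟩ <;>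
    rw [hr, hs] at h' <;> simp only [cross2, Prod.fst_neg, Prod.snd_neg] at * <;> linarith

lemma aux_closure (d : ℕ) (v : ℤ → Pt) (p : ℤ → ℝ) (x : Pt)
    (hx : x ∈ closure (DOPset d v p)) (k : ℤ)
    (hk : k ∈ Finset.Icc (1 : ℤ) (2 * (d : ℤ))) : dot2 x (perp2 (v k)) ≤ p k := by
  have hc : IsClosed {y : Pt | dot2 y (perp2 (v k)) ≤ p k} := by
    apply isClosed_le _ continuous_const
    unfold dot2
    fun_prop
  have hsub : DOPset d v p ⊆ {y : Pt | dot2 y (perp2 (v k)) ≤ p k} :=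
    fun y hy => le_of_lt (hy k hk)
  exact closure_minimal hsub hc hx

lemma aux_relint (d : ℕ) (v : ℤ → Pt) (hv : DirOK d v) (p : ℤ → ℝ) (hp : IsDOP d v p)
    (i : ℤ) (hi : i ∈ Finset.Icc (1 : ℤ) (2 * (d : ℤ))) (x : Pt) (hx : x ∈ relintE d v p i) :
    dot2 x (perp2 (v i)) = p i ∧
      ∀ k ∈ Finset.Icc (1 : ℤ) (2 * (d : ℤ)), k ≠ i → dot2 x (perp2 (v k)) < p k := by
  unfold relintE tlPt hdPt at hx
  by_cases h : ∃ th : Pt × Pt, IsTH v i (edgeOf d v p i) th.1 th.2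
  swap
  · exfalso
    simp [THpair, h] at hx
  have hTH : IsTH v i (edgeOf d v p i) (THpair d v p i).1 (THpair d v p i).2 := by
    unfold THpair
    rw [dif_pos h]
    exact h.choose_spec
  generalize (THpair d v p i).1 = t at *
  generalize (THpair d v p i).2 = e at *
  obtain ⟨hseg, c, hc, hec⟩ := hTH
  obtain ⟨hxs, hxn⟩ := hx
  simp only [Set.mem_insert_iff, Set.mem_singleton_iff, not_or] at hxn
  have hxe : x ∈ edgeOf d v p i := hseg ▸ hxs
  have hte : t ∈ edgeOf d v p i := hseg ▸ left_mem_segment ℝ t e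
  have hee : e ∈ edgeOf d v p i := hseg ▸ right_mem_segment ℝ t e
  have hxi : dot2 x (perp2 (v i)) = p i := hxe.2
  refine ⟨hxi, fun k hk hki => ?_⟩
  by_cases hopp : k = i + d ∨ i = k + d
  · have hvk : v k = - v i := by
      rcases hopp with rfl | rfl
      · exact hv.2.2.1 i
      · rw [hv.2.2.1 k, neg_neg]
    obtain ⟨z, hz⟩ := hp.1
    have h1 := hz i hi
    have h2 := hz k hk
    rw [hvk] at h2 ⊢
    simp only [dot2, perp2, Prod.fst_neg, Prod.snd_neg] at *
    linarith
  · push Not at hopp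
    have hcr := aux_cross d v hv i k hi hk hki hopp.1 hopp.2
    have hlt := aux_closure d v p t hte.1 k hk
    have hle := aux_closure d v p e hee.1 k hk
    obtain ⟨a, b, ha, hb, hab, rfl⟩ := hxs
    have he : e = t + c • v i := by rw [← hec]; abel
    have ha0 : a ≠ 0 := by
      rintro rfl
      apply hxn.2
      have : b = 1 := by linarith
      simp [this]
    have hb0 : b ≠ 0 := by
      rintro rfl
      apply hxn.1
      have : a = 1 := by linarith
      simp [this]
    have hc0 : c ≠ 0 := by
      rintro rfl
      apply hxn.1
      rw [he]
      simp [← add_smul, hab]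
    have hne : dot2 t (perp2 (v k)) ≠ dot2 e (perp2 (v k)) := by
      intro hh
      apply mul_ne_zero hc0 hcr
      rw [he] at hh
      simp only [dot2, perp2, cross2, Prod.fst_add, Prod.snd_add, Prod.smul_fst, Prod.smul_snd,
        smul_eq_mul] at *
      linarith
    have hlin : dot2 (a • t + b • e) (perp2 (v k))
        = a * dot2 t (perp2 (v k)) + b * dot2 e (perp2 (v k)) := by
      simp only [dot2, perp2, Prod.fst_add, Prod.snd_add, Prod.smul_fst, Prod.smul_snd,
        smul_eq_mul]
      ring
    rw [hlin]
    have ha' : 0 < a := lt_of_le_of_ne ha (Ne.symm ha0)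
    have hb' : 0 < b := lt_of_le_of_ne hb (Ne.symm hb0)
    have hpk : p k = a * p k + b * p k := by rw [← add_mul, hab, one_mul]
    rw [hpk]
    rcases lt_or_eq_of_le hlt with h3 | h3
    · exact add_lt_add_of_lt_of_le (mul_lt_mul_of_pos_left h3 ha')
        (mul_le_mul_of_nonneg_left hle hb)
    · have h4 : dot2 e (perp2 (v k)) < p k := lt_of_le_of_ne hle (fun h5 => hne (h3.trans h5.symm))
      exact add_lt_add_of_le_of_lt (mul_le_mul_of_nonneg_left hlt ha)
        (mul_lt_mul_of_pos_left h4 hb')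

lemma aux_event (d : ℕ) (v : ℤ → Pt) (p : ℤ → ℝ) (i : ℤ) (x u : Pt)
    (hx : dot2 x (perp2 (v i)) = p i ∧
      ∀ k ∈ Finset.Icc (1 : ℤ) (2 * (d : ℤ)), k ≠ i → dot2 x (perp2 (v k)) < p k)
    (hu : dot2 u (perp2 (v i)) < 0) :
    ∀ᶠ s : ℝ in nhdsWithin 0 (Set.Ioi 0), x + s • u ∈ DOPset d v p := by
  have : ∀ᶠ s : ℝ in nhdsWithin 0 (Set.Ioi 0), ∀ k ∈ Finset.Icc (1 : ℤ) (2 * (d : ℤ)),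
      dot2 (x + s • u) (perp2 (v k)) < p k := by
    rw [Finset.eventually_all]
    intro k hk
    by_cases hki : k = i
    · subst hki
      filter_upwards [self_mem_nhdsWithin] with s hs
      have hs' : (0 : ℝ) < s := hs
      have h1 := mul_neg_of_pos_of_neg hs' hu
      rw [← hx.1]
      simp only [dot2, perp2, Prod.fst_add, Prod.snd_add, Prod.smul_fst, Prod.smul_snd,
        smul_eq_mul] at *
      linarith
    · apply Filter.Eventually.filter_mono nhdsWithin_le_nhds
      have hcont : Continuous (fun s : ℝ => dot2 (x + s • u) (perp2 (v k))) := by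
        unfold dot2
        fun_prop
      apply hcont.continuousAt.eventually_lt continuousAt_const
      simpa using hx.2 k hk hki
  exact this

/-- If `P₁ ≠ P₂` are `d`-DOPs, `i, j ∈ {1,…,2d}` with
`j ≢ i + d (mod 2d)`, and the relative interiors of the edges `e_i(P₁)` and `e_j(P₂)`
meet, then `P₁` and `P₂` intersect (as open sets). -/
theorem stmt2 (d : ℕ) (v : ℤ → Pt) (hv : DirOK d v) (p₁ p₂ : ℤ → ℝ)
    (h₁ : IsDOP d v p₁) (h₂ : IsDOP d v p₂)
    (hne : DOPset d v p₁ ≠ DOPset d v p₂)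
    (i j : ℤ) (hi : i ∈ Finset.Icc (1 : ℤ) (2 * (d : ℤ)))
    (hj : j ∈ Finset.Icc (1 : ℤ) (2 * (d : ℤ)))
    (hmod : ¬ (2 * (d : ℤ)) ∣ (j - (i + (d : ℤ))))
    (hmeet : (relintE d v p₁ i ∩ relintE d v p₂ j).Nonempty) :
    (DOPset d v p₁ ∩ DOPset d v p₂).Nonempty := by
  obtain ⟨x, hx1, hx2⟩ := hmeet
  have k1 := aux_relint d v hv p₁ h₁ i hi x hx1
  have k2 := aux_relint d v hv p₂ h₂ j hj x hx2
  obtain ⟨u, hu1, hu2⟩ : ∃ u : Pt, dot2 u (perp2 (v i)) < 0 ∧ dot2 u (perp2 (v j)) < 0 := by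
    by_cases hij : j = i
    · subst hij
      obtain ⟨z, hz⟩ := h₁.1
      have h3 := hz j hj
      have h4 := k1.1
      refine ⟨z - x, ?_⟩
      simp only [dot2, perp2, Prod.fst_sub, Prod.snd_sub] at *
      constructor <;> linarith
    · have hc := aux_cross d v hv i j hi hj hij
        (fun h => hmod (by rw [h, sub_self]; exact dvd_zero _))
        (fun h => hmod ⟨-1, by rw [h]; ring⟩)
      have hc2 : 0 < cross2 (v i) (v j) * cross2 (v i) (v j) := mul_self_pos.2 hc
      refine ⟨cross2 (v i) (v j) • (v j - v i), ?_⟩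
      simp only [dot2, perp2, cross2, Prod.fst_sub, Prod.snd_sub, Prod.smul_fst, Prod.smul_snd,
        smul_eq_mul] at *
      constructor <;> linarith
  obtain ⟨s, hs1, hs2⟩ := ((aux_event d v p₁ i x u k1 hu1).and
    (aux_event d v p₂ j x u k2 hu2)).exists
  exact ⟨x + s • u, hs1, hs2⟩
end
end

section
/- Let OPT be an independent family of d-DOPs and let (v_i, a) with i ∈ {1,…,2d} and a ∈ {t, h} be a charging option. If P₁ ∈ OPT and P₂ ∈ OPT both see the same polygon P' ∈ OPT with respect to (v_i, a), then P₁ = P₂. -/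
open scoped Classical

noncomputable section

open Filter Topology

lemma closure_le (d : ℕ) (v : ℤ → Pt) (p : ℤ → ℝ) (j : ℤ)
    (hj : j ∈ Finset.Icc (1 : ℤ) (2 * (d : ℤ))) (x : Pt)
    (hx : x ∈ closure (DOPset d v p)) : dot2 x (perp2 (v j)) ≤ p j := by
  have hc : IsClosed {x : Pt | dot2 x (perp2 (v j)) ≤ p j} := by
    apply isClosed_le _ continuous_const
    unfold dot2
    fun_prop
  exact closure_minimal (fun y hy => (hy j hj).le) hc hx

lemma tail_head_spec (d : ℕ) (v : ℤ → Pt) (p : ℤ → ℝ) (i : ℤ)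
    (h : tlPt d v p i ≠ hdPt d v p i) :
    IsTH v i (edgeOf d v p i) (tlPt d v p i) (hdPt d v p i) := by
  unfold tlPt hdPt THpair at *
  split_ifs at h ⊢ with h'
  · exact h'.choose_spec
  · simp at h

/-- A point which is seen lies in the edge, together with a nondegenerate piece of the edge
in the direction of `v i` (with sign depending on the option). -/
lemma sees_piece (d : ℕ) (v : ℤ → Pt) (p : ℤ → ℝ) (i : ℤ) (a : Bool) (z : Pt)
    (h : tlPt d v p i ≠ hdPt d v p i)
    (hz : z ∈ relintE d v p i ∪ {if a then hdPt d v p i else tlPt d v p i}) :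
    v i ≠ 0 ∧ z ∈ edgeOf d v p i ∧ ∃ r : ℝ, 0 < r ∧
      z + (r * (if a then -1 else 1)) • v i ∈ edgeOf d v p i := by
  obtain ⟨he, c, hc, hth⟩ := tail_head_spec d v p i h
  have hv : v i ≠ 0 := by
    intro h0
    rw [h0, smul_zero, sub_eq_zero] at hth
    exact h hth.symm
  have hc0 : 0 < c := by
    rcases hc.eq_or_lt with h0 | h0
    · rw [← h0, zero_smul, sub_eq_zero] at hth
      exact absurd hth.symm h
    · exact h0
  set T := tlPt d v p i with hT
  set H := hdPt d v p i with hH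
  have hH' : H = T + c • v i := by rw [← hth]; abel
  have hzseg : z ∈ segment ℝ T H := by
    rcases hz with hz | hz
    · exact hz.1
    · rw [Set.mem_singleton_iff] at hz
      rw [hz]
      split_ifs
      · exact right_mem_segment ℝ T H
      · exact left_mem_segment ℝ T H
  refine ⟨hv, he ▸ hzseg, ?_⟩
  rw [segment_eq_image'] at hzseg
  obtain ⟨s, ⟨hs0, hs1⟩, hs⟩ := hzseg
  simp only at hs
  rw [hth] at hs
  cases a with
  | true =>
    have hne : s ≠ 0 := by
      rintro rfl
      have hzT : z = T := by rw [← hs]; simp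
      rcases hz with hz | hz
      · exact hz.2 (Or.inl hzT)
      · exact h (hzT.symm.trans (by simpa using hz))
    refine ⟨s * c, mul_pos (lt_of_le_of_ne hs0 hne.symm) hc0, ?_⟩
    have : z + (s * c * (if true then -1 else 1)) • v i = T := by
      rw [← hs]; simp only [if_true]; module
    rw [this, he]
    exact left_mem_segment ℝ T H
  | false =>
    have hne : s ≠ 1 := by
      rintro rfl
      have hzT : z = H := by rw [← hs, hH']; simp
      rcases hz with hz | hz
      · exact hz.2 (Or.inr hzT)
      · exact h (Eq.symm (hzT.symm.trans (by simpa using hz)))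
    refine ⟨(1 - s) * c, mul_pos (sub_pos.2 (lt_of_le_of_ne hs1 hne)) hc0, ?_⟩
    have : z + ((1 - s) * c * (if false = true then -1 else 1)) • v i = H := by
      rw [← hs, hH']; simp only [Bool.false_eq_true, if_false]; module
    rw [this, he]
    exact right_mem_segment ℝ T H

/-- Just below an interior point of a piece of an edge one finds points of the polygon. -/
lemma eventually_mem (d : ℕ) (v : ℤ → Pt) (p : ℤ → ℝ) (i : ℤ)
    (hi : i ∈ Finset.Icc (1 : ℤ) (2 * (d : ℤ))) (hne : (DOPset d v p).Nonempty)
    (hv : v i ≠ 0) (z : Pt) (σ r s : ℝ) (hσ : σ ≠ 0) (hs : 0 < s) (hsr : s < r)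
    (hz : z ∈ edgeOf d v p i) (hz' : z + (r * σ) • v i ∈ edgeOf d v p i) :
    ∀ᶠ ε : ℝ in 𝓝[>] 0, z + (s * σ) • v i - ε • perp2 (v i) ∈ DOPset d v p := by
  obtain ⟨x, hx⟩ := hne
  have hN : 0 < (v i).1 ^ 2 + (v i).2 ^ 2 := by
    by_contra hcon
    have h1 : (v i).1 = 0 := by nlinarith [sq_nonneg (v i).1, sq_nonneg (v i).2]
    have h2 : (v i).2 = 0 := by nlinarith [sq_nonneg (v i).1, sq_nonneg (v i).2]
    exact hv (Prod.ext h1 h2)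
  unfold DOPset
  simp only [Set.mem_setOf_eq]
  rw [Filter.eventually_all_finset]
  intro j hj
  have h1 := closure_le d v p j hj _ hz.1
  have h2 := closure_le d v p j hj _ hz'.1
  have h3 : dot2 z (perp2 (v i)) = p i := hz.2
  have hxi := hx i hi
  have hxj := hx j hj
  have hlin : ∀ ε : ℝ, dot2 (z + (s * σ) • v i - ε • perp2 (v i)) (perp2 (v j))
      = dot2 z (perp2 (v j)) + s * (σ * dot2 (v i) (perp2 (v j))) - ε * dot2 (v i) (v j) := by
    intro ε
    simp [dot2, perp2]
    ring
  have hlin2 : dot2 (z + (r * σ) • v i) (perp2 (v j))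
      = dot2 z (perp2 (v j)) + r * (σ * dot2 (v i) (perp2 (v j))) := by
    simp [dot2, perp2]
    ring
  rw [hlin2] at h2
  simp only [hlin]
  set A := dot2 z (perp2 (v j)) with hA
  set B := σ * dot2 (v i) (perp2 (v j)) with hB
  by_cases hlt : A + s * B < p j
  · have hcont : Continuous (fun ε : ℝ => A + s * B - ε * dot2 (v i) (v j)) := by fun_prop
    have := hcont.tendsto 0
    simp only [zero_mul, sub_zero] at this
    exact (this.eventually_lt_const hlt).filter_mono nhdsWithin_le_nhds
  · have hB0 : B = 0 := by
      apply le_antisymm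
      · nlinarith
      · nlinarith
    have hcr : dot2 (v i) (perp2 (v j)) = 0 := by
      rcases mul_eq_zero.1 hB0 with h | h
      · exact absurd h hσ
      · exact h
    have hAp : A = p j := by rw [hB0] at hlt; linarith
    have hpos : 0 < dot2 (v i) (v j) := by
      have e1 : 0 < dot2 z (perp2 (v i)) - dot2 x (perp2 (v i)) := by linarith
      have e2 : 0 < dot2 z (perp2 (v j)) - dot2 x (perp2 (v j)) := by linarith
      have e3 : (dot2 z (perp2 (v j)) - dot2 x (perp2 (v j))) * ((v i).1 ^ 2 + (v i).2 ^ 2)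
          = dot2 (v i) (v j) * (dot2 z (perp2 (v i)) - dot2 x (perp2 (v i))) := by
        simp only [dot2, perp2] at hcr ⊢
        linear_combination ((z.1 - x.1) * (v i).1 + (z.2 - x.2) * (v i).2) * hcr
      have e4 := mul_pos e2 hN
      rw [e3] at e4
      exact (pos_iff_pos_of_mul_pos e4).2 e1
    filter_upwards [self_mem_nhdsWithin] with ε hε
    have hε' : 0 < ε := hε
    have := mul_pos hε' hpos
    rw [hB0]
    linarith

/-- Let `OPT` be an independent family of `d`-DOPs and `(v_i, a)` a
charging option (`a = true` is `h`, `a = false` is `t`). If `P₁, P₂ ∈ OPT` both see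
the same `P' ∈ OPT` with respect to `(v_i, a)`, then `P₁ = P₂`. -/
theorem stmt3 (d : ℕ) (v : ℤ → Pt) (hv : DirOK d v) (OPT : Set (ℤ → ℝ))
    (hDOP : ∀ p ∈ OPT, IsDOP d v p) (hind : Indep d v OPT)
    (i : ℤ) (hi : i ∈ Finset.Icc (1 : ℤ) (2 * (d : ℤ))) (a : Bool)
    (p₁ p₂ p' : ℤ → ℝ) (hp₁ : p₁ ∈ OPT) (hp₂ : p₂ ∈ OPT) (hp' : p' ∈ OPT)
    (hsee₁ : SeesOpt d v p₁ p' i a) (hsee₂ : SeesOpt d v p₂ p' i a) :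
    p₁ = p₂ := by
  by_contra hne
  obtain ⟨hn1, hm1⟩ := hsee₁
  obtain ⟨hn2, hm2⟩ := hsee₂
  obtain ⟨hv0, hz1, r1, hr1, hw1⟩ := sees_piece d v p₁ i a _ hn1 hm1
  obtain ⟨-, hz2, r2, hr2, hw2⟩ := sees_piece d v p₂ i a _ hn2 hm2
  obtain ⟨s, hs0, hs⟩ := exists_between (lt_min hr1 hr2)
  have hσ : (if a = true then (-1 : ℝ) else 1) ≠ 0 := by split_ifs <;> norm_num
  have E1 := eventually_mem d v p₁ i hi (hDOP p₁ hp₁).1 hv0 _ _ r1 s hσ hs0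
    (hs.trans_le (min_le_left _ _)) hz1 hw1
  have E2 := eventually_mem d v p₂ i hi (hDOP p₂ hp₂).1 hv0 _ _ r2 s hσ hs0
    (hs.trans_le (min_le_right _ _)) hz2 hw2
  obtain ⟨ε, h1, h2⟩ := (E1.and E2).exists
  have hdisj := (hind p₁ hp₁ p₂ hp₂ hne).2
  exact (Set.eq_empty_iff_forall_notMem.1 hdisj) _ ⟨h1, h2⟩
end
end

section
/- Let P ∈ OPT and let c be a point such that c = h(e) = t(e') for two non-degenerate edges e = e_i(P) and e' = e_j(P) of P with i ≠ j. If e is not contained in ∂C* or e' is not contained in ∂C*, then P is accountable with respect to the charging option (v_i, h) or P is accountable with respect to the charging option (v_j, t). -/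
open scoped Classical

noncomputable section

/-! ### Linear algebra helpers -/

lemma g_add (c w v : Pt) (t : ℝ) :
    dot2 (c + t • w) (perp2 v) = dot2 c (perp2 v) + t * dot2 w (perp2 v) := by
  simp [dot2, perp2]; ring

lemma g_sub (c w v : Pt) (t : ℝ) :
    dot2 (c - t • w) (perp2 v) = dot2 c (perp2 v) - t * dot2 w (perp2 v) := by
  simp [dot2, perp2]; ring

lemma g_self (v : Pt) : dot2 v (perp2 v) = 0 := by
  simp [dot2, perp2]; ring

lemma g_anti (v w : Pt) : dot2 w (perp2 v) = - dot2 v (perp2 w) := by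
  simp [dot2, perp2]; ring

lemma g_neg (x v : Pt) : dot2 x (perp2 (-v)) = - dot2 x (perp2 v) := by
  simp [dot2, perp2]; ring

lemma g_cont (v : Pt) : Continuous (fun x : Pt => dot2 x (perp2 v)) := by
  unfold dot2; fun_prop

lemma lemB (f : StrongDual ℝ Pt) (v : Pt) (hv : v ≠ 0) (hf : f v = 0) (c z : Pt)
    (hfz : f z < f c) (hgz : dot2 z (perp2 v) < dot2 c (perp2 v)) :
    ∃ k : ℝ, 0 < k ∧ ∀ x, f x - f c = k * (dot2 x (perp2 v) - dot2 c (perp2 v)) := by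
  have hx : ∀ x : Pt, f x = x.1 * f (1, 0) + x.2 * f (0, 1) := by
    intro x
    have : x = x.1 • ((1, 0) : Pt) + x.2 • ((0, 1) : Pt) := by ext <;> simp
    conv_lhs => rw [this]
    rw [map_add, map_smul, map_smul]; simp
  have hN : 0 < v.1 ^ 2 + v.2 ^ 2 := by
    by_contra h
    apply hv
    have h1 : v.1 = 0 := by nlinarith [sq_nonneg v.1, sq_nonneg v.2]
    have h2 : v.2 = 0 := by nlinarith [sq_nonneg v.1, sq_nonneg v.2]
    ext <;> simp [h1, h2]
  set f1 := f (1, 0)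
  set f2 := f (0, 1)
  have h0 : v.1 * f1 + v.2 * f2 = 0 := by rw [← hx, hf]
  have key : ∀ x, f x - f c =
      ((f1 * v.2 - f2 * v.1) / (v.1 ^ 2 + v.2 ^ 2)) * (dot2 x (perp2 v) - dot2 c (perp2 v)) := by
    intro x
    rw [hx x, hx c, div_mul_eq_mul_div, eq_div_iff hN.ne']
    simp only [dot2, perp2]
    linear_combination ((x.1 - c.1) * v.1 + (x.2 - c.2) * v.2) * h0
  refine ⟨_, ?_, key⟩
  have := key z
  by_contra hk
  push Not at hk
  nlinarith

lemma lemA (Q Q' : Set Pt) (hQo : IsOpen Q) (hQc : Convex ℝ Q) (hQn : Q.Nonempty)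
    (hQo' : IsOpen Q') (hQc' : Convex ℝ Q') (hdis : Q ∩ Q' = ∅)
    (v : Pt) (hv : v ≠ 0) (c : Pt) (s t : ℝ) (hs : 0 < s) (ht : 0 < t)
    (ha : c - s • v ∈ closure Q) (hb : c + t • v ∈ closure Q) (hc : c ∈ closure Q')
    (hlt : ∀ z ∈ Q, dot2 z (perp2 v) < dot2 c (perp2 v)) :
    ∀ z ∈ Q', dot2 c (perp2 v) < dot2 z (perp2 v) := by
  obtain ⟨f, u, h1, h2⟩ := geometric_hahn_banach_open_open hQc hQo hQc' hQo'
    (Set.disjoint_iff_inter_eq_empty.2 hdis)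
  have hcl : ∀ x ∈ closure Q, f x ≤ u := by
    intro x hx
    exact closure_minimal (t := {x | f x ≤ u}) (fun y hy => (h1 y hy).le)
      (isClosed_le f.continuous continuous_const) hx
  have hcl' : u ≤ f c := 
    closure_minimal (t := {x | u ≤ f x}) (fun y hy => (h2 y hy).le)
      (isClosed_le continuous_const f.continuous) hc
  have e1 := hcl _ ha
  have e2 := hcl _ hb
  simp only [map_add, map_sub, map_smul, smul_eq_mul] at e1 e2
  have hf : f v = 0 := by
    apply le_antisymm <;> nlinarith
  have hu : f c = u := by rw [hf] at e1; linarith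
  obtain ⟨z, hz⟩ := hQn
  obtain ⟨k, hk, hk'⟩ := lemB f v hv hf c z (by rw [hu]; exact h1 z hz) (hlt z hz)
  intro y hy
  have h3 := h2 y hy
  have h4 := hk' y
  by_contra h
  push Not at h
  nlinarith

/-! ### Support lines of the bounding box -/

lemma support (C : Set Pt) (hC : IsCompact C) (hconv : Convex ℝ C)
    (hint : (interior C).Nonempty) (x v : Pt) (s t : ℝ) (hs : 0 < s) (ht : 0 < t)
    (ha : x - s • v ∈ C) (hb : x + t • v ∈ C) (hx : x ∈ frontier C) :
    ∃ f : StrongDual ℝ Pt, f v = 0 ∧ (∀ z ∈ interior C, f z < f x) ∧ ∀ z ∈ C, f z ≤ f x := by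
  obtain ⟨f, hf⟩ := geometric_hahn_banach_open_point hconv.interior isOpen_interior hx.2
  have hle : ∀ z ∈ C, f z ≤ f x := by
    intro z hz
    have : z ∈ closure (interior C) := by
      rw [hconv.closure_interior_eq_closure_of_nonempty_interior hint]
      exact subset_closure hz
    exact closure_minimal (t := {y | f y ≤ f x}) (fun y hy => (hf y hy).le)
      (isClosed_le f.continuous continuous_const) this
  refine ⟨f, ?_, hf, hle⟩
  have e1 := hle _ ha
  have e2 := hle _ hb
  simp only [map_add, map_sub, map_smul, smul_eq_mul] at e1 e2
  apply le_antisymm <;> nlinarith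

lemma dop_cl_le (d : ℕ) (v : ℤ → Pt) (p : ℤ → ℝ) (k : ℤ)
    (hk : k ∈ Finset.Icc (1 : ℤ) (2 * (d : ℤ))) (x : Pt) (hx : x ∈ closure (DOPset d v p)) :
    dot2 x (perp2 (v k)) ≤ p k :=
  closure_minimal (t := {x | dot2 x (perp2 (v k)) ≤ p k}) (fun y hy => (hy k hk).le)
      (isClosed_le (g_cont _) continuous_const) hx

lemma cl_ge (Q : Set Pt) (v : Pt) (m : ℝ) (h : ∀ z ∈ Q, m < dot2 z (perp2 v)) (x : Pt)
    (hx : x ∈ closure Q) : m ≤ dot2 x (perp2 v) :=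
  closure_minimal (t := {x | m ≤ dot2 x (perp2 v)}) (fun y hy => (h y hy).le)
      (isClosed_le continuous_const (g_cont _)) hx

/-- for `i` in range, `i + d` may be replaced by an equivalent index in range. -/
lemma shift_idx (d : ℕ) (v : ℤ → Pt) (hv : ∀ i : ℤ, v (i + (d : ℤ)) = -v i) (q : ℤ → ℝ)
    (hq : ∀ i : ℤ, q (i + 2 * (d : ℤ)) = q i)
    (i : ℤ) (hi : i ∈ Finset.Icc (1 : ℤ) (2 * (d : ℤ))) :
    ∃ k ∈ Finset.Icc (1 : ℤ) (2 * (d : ℤ)), v k = - v i ∧ q k = q (i + d) := by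
  rw [Finset.mem_Icc] at hi
  by_cases h : i ≤ d
  · refine ⟨i + d, ?_, hv i, rfl⟩
    rw [Finset.mem_Icc]; omega
  · refine ⟨i - d, ?_, ?_, ?_⟩
    · rw [Finset.mem_Icc]; omega
    · have := hv (i - d)
      rw [sub_add_cancel] at this
      rw [this, neg_neg]
    · have := hq (i - d)
      rw [← this]; congr 1; ring

lemma thpair_spec (d : ℕ) (v : ℤ → Pt) (p : ℤ → ℝ) (i : ℤ)
    (h : ∃ th : Pt × Pt, IsTH v i (edgeOf d v p i) th.1 th.2) :
    IsTH v i (edgeOf d v p i) (tlPt d v p i) (hdPt d v p i) := by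
  have : THpair d v p i = h.choose := by unfold THpair; rw [dif_pos h]
  unfold tlPt hdPt
  rw [this]
  exact h.choose_spec

lemma nondeg_spec (d : ℕ) (v : ℤ → Pt) (p : ℤ → ℝ) (i : ℤ)
    (hne : tlPt d v p i ≠ hdPt d v p i) :
    IsTH v i (edgeOf d v p i) (tlPt d v p i) (hdPt d v p i) := by
  apply thpair_spec
  by_contra h
  apply hne
  unfold tlPt hdPt THpair
  rw [dif_neg h]; rfl

lemma edge_th (d : ℕ) (v : ℤ → Pt) (q : ℤ → ℝ) (hq : IsDOP d v q) (i : ℤ) (hvi : v i ≠ 0)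
    (x : Pt) (hx : x ∈ edgeOf d v q i) :
    ∃ th : Pt × Pt, IsTH v i (edgeOf d v q i) th.1 th.2 := by
  set φ : ℝ → Pt := fun t => x + t • v i with hφ
  set T : Set ℝ := {t | φ t ∈ closure (DOPset d v q)} with hT
  have hφc : Continuous φ := by fun_prop
  have hTc : IsClosed T := isClosed_closure.preimage hφc
  have hedge : ∀ y, y ∈ edgeOf d v q i ↔ ∃ t ∈ T, y = φ t := by
    intro y
    constructor
    · rintro ⟨hy, hy'⟩
      have hx' := hx.2
      simp only [Set.mem_setOf_eq, dot2, perp2] at hy' hx'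
      have hN : 0 < (v i).1 ^ 2 + (v i).2 ^ 2 := by
        by_contra h
        apply hvi
        have h1 : (v i).1 = 0 := by nlinarith [sq_nonneg (v i).1, sq_nonneg (v i).2]
        have h2 : (v i).2 = 0 := by nlinarith [sq_nonneg (v i).1, sq_nonneg (v i).2]
        ext <;> simp [h1, h2]
      have hyt : y = φ (((y.1 - x.1) * (v i).1 + (y.2 - x.2) * (v i).2) /
          ((v i).1 ^ 2 + (v i).2 ^ 2)) := by
        ext
        · simp only [hφ, Prod.fst_add, Prod.smul_fst, smul_eq_mul]
          field_simp
          linear_combination (v i).2 * (hy' - hx')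
        · simp only [hφ, Prod.snd_add, Prod.smul_snd, smul_eq_mul]
          field_simp
          linear_combination - (v i).1 * (hy' - hx')
      exact ⟨_, by rw [hT, Set.mem_setOf_eq, ← hyt]; exact hy, hyt⟩
    · rintro ⟨t, ht, rfl⟩
      refine ⟨ht, ?_⟩
      rw [Set.mem_setOf_eq, hφ]
      simp only
      rw [g_add, g_self, hx.2]; simp
  have hTb : Bornology.IsBounded T := by
    have hb := hq.2.1.closure
    obtain ⟨R, hR⟩ := hb.exists_norm_le
    rw [isBounded_iff_forall_norm_le]
    refine ⟨(R + ‖x‖) / ‖v i‖, fun t ht => ?_⟩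
    rw [le_div_iff₀ (norm_pos_iff.2 hvi), ← norm_smul]
    have h1 := hR _ ht
    calc ‖t • v i‖ = ‖φ t - x‖ := by simp [hφ]
      _ ≤ ‖φ t‖ + ‖x‖ := norm_sub_le _ _
      _ ≤ _ := by linarith
  have h0 : (0 : ℝ) ∈ T := by simp only [hT, hφ, Set.mem_setOf_eq, zero_smul, add_zero]; exact hx.1
  have hcomp : IsCompact T := Metric.isCompact_of_isClosed_isBounded hTc hTb
  obtain ⟨m, hm, hm'⟩ := hcomp.exists_isLeast ⟨0, h0⟩
  obtain ⟨M, hM, hM'⟩ := hcomp.exists_isGreatest ⟨0, h0⟩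
  have hmM : m ≤ M := hm' hM
  refine ⟨(φ m, φ M), ?_, M - m, by linarith, ?_⟩
  · ext y
    rw [hedge]
    constructor
    · rintro ⟨t, ht, rfl⟩
      have ht1 : t ∈ segment ℝ m M := by rw [segment_eq_Icc hmM]; exact ⟨hm' ht, hM' ht⟩
      obtain ⟨a, b, ha, hb, hab, rfl⟩ := ht1
      refine ⟨a, b, ha, hb, hab, ?_⟩
      simp only [hφ]
      have : x = (a + b) • x := by rw [hab, one_smul]
      conv_rhs => rw [this]
      simp only [smul_eq_mul]; module
    · rintro ⟨a, b, ha, hb, hab, rfl⟩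
      refine ⟨a * m + b * M, ?_, ?_⟩
      · have := (dop_convex d v q).closure hm hM ha hb hab
        rw [hT, Set.mem_setOf_eq]
        convert this using 1
        simp only [hφ]
        have : x = (a + b) • x := by rw [hab, one_smul]
        conv_lhs => rw [this]
        module
      · simp only [hφ]
        have : x = (a + b) • x := by rw [hab, one_smul]
        conv_rhs => rw [this]
        module
  · simp only [hφ]; module

/-- Coordinates for points of the relative interior of an edge. -/
lemma relint_coord (d : ℕ) (v : ℤ → Pt) (p : ℤ → ℝ) (i : ℤ) (s : ℝ) (hs : 0 < s)
    (hst : hdPt d v p i - tlPt d v p i = s • v i) (x : Pt) (hx : x ∈ relintE d v p i) :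
    ∃ a b : ℝ, 0 < a ∧ 0 < b ∧ tlPt d v p i = x - a • v i ∧ hdPt d v p i = x + b • v i := by
  obtain ⟨⟨a, b, ha, hb, hab, rfl⟩, hne⟩ := hx
  have hh : hdPt d v p i = tlPt d v p i + s • v i := by rw [← hst]; abel
  have ha' : a = 1 - b := by linarith
  subst ha'
  simp only [Set.mem_insert_iff, Set.mem_singleton_iff, not_or] at hne
  have hb0 : b ≠ 0 := by rintro rfl; apply hne.1; simp
  have hb1 : 1 - b ≠ 0 := by
    intro h
    apply hne.2
    have : b = 1 := by linarith
    subst this; simp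
  refine ⟨b * s, (1 - b) * s, ?_, ?_, ?_, ?_⟩
  · exact mul_pos (lt_of_le_of_ne hb hb0.symm) hs
  · exact mul_pos (lt_of_le_of_ne ha hb1.symm) hs
  · rw [hh]; module
  · rw [hh]; module

lemma mem_relint (d : ℕ) (v : ℤ → Pt) (p : ℤ → ℝ) (i : ℤ) (x : Pt) (hvi : v i ≠ 0)
    (a b : ℝ) (ha : 0 < a) (hb : 0 < b) (h1 : tlPt d v p i = x - a • v i)
    (h2 : hdPt d v p i = x + b • v i) : x ∈ relintE d v p i := by
  refine ⟨⟨b / (a + b), a / (a + b), by positivity, by positivity, by field_simp; ring, ?_⟩, ?_⟩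
  · rw [h1, h2]
    have e : b / (a + b) + a / (a + b) = 1 := by field_simp; ring
    have e2 : a / (a + b) * b - b / (a + b) * a = 0 := by field_simp; ring
    calc _ = (b / (a + b) + a / (a + b)) • x + (a / (a + b) * b - b / (a + b) * a) • v i := by module
      _ = x := by rw [e, e2]; simp
  · rw [h1, h2]
    simp only [Set.mem_insert_iff, Set.mem_singleton_iff, not_or]
    constructor
    · intro h
      rw [eq_comm, sub_eq_self, smul_eq_zero] at h
      exact h.elim ha.ne' hvi
    · intro h
      rw [eq_comm, add_eq_left, smul_eq_zero] at h
      exact h.elim hb.ne' hvi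

/-- A polygon touching the relative interior of an edge lies on the other side, and its opposite
edge contains the touching point. -/
lemma touch (d : ℕ) (v : ℤ → Pt) (hv : ∀ i : ℤ, v (i + (d : ℤ)) = -v i) (p q : ℤ → ℝ)
    (hP : IsDOP d v p) (hQ : IsDOP d v q) (hdis : DOPset d v p ∩ DOPset d v q = ∅)
    (i : ℤ) (hi : i ∈ Finset.Icc (1 : ℤ) (2 * (d : ℤ))) (hvi : v i ≠ 0)
    (x : Pt) (a b : ℝ) (ha : 0 < a) (hb : 0 < b)
    (hA : x - a • v i ∈ edgeOf d v p i) (hB : x + b • v i ∈ edgeOf d v p i)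
    (hx : x ∈ closure (DOPset d v q)) :
    (∀ z ∈ DOPset d v q, p i < dot2 z (perp2 (v i))) ∧
    ∃ s t : ℝ, 0 ≤ s ∧ 0 ≤ t ∧
      tlPt d v q (i + d) = x + s • v i ∧ hdPt d v q (i + d) = x - t • v i ∧
      tlPt d v q (i + d) ∈ closure (DOPset d v q) ∧ hdPt d v q (i + d) ∈ closure (DOPset d v q) := by
  have hgx : dot2 x (perp2 (v i)) = p i := by
    have := hA.2
    rw [Set.mem_setOf_eq, g_sub, g_self] at this
    linarith
  have hside := lemA _ _ (dop_open d v p) (dop_convex d v p) hP.1 (dop_open d v q)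
    (dop_convex d v q) hdis (v i) hvi x a b ha hb hA.1 hB.1 hx
    (fun z hz => by rw [hgx]; exact hz i hi)
  rw [hgx] at hside
  refine ⟨hside, ?_⟩
  obtain ⟨k, hk, hvk, hqk⟩ := shift_idx d v hv q hQ.2.2.1 i hi
  obtain ⟨y, hy, hy'⟩ := hQ.2.2.2 k hk
  have h1 := cl_ge _ _ _ hside y hy
  rw [Set.mem_setOf_eq, hvk, g_neg] at hy'
  have h2 := dop_cl_le d v q k hk x hx
  rw [hvk, g_neg, hgx] at h2
  have hxe : x ∈ edgeOf d v q (i + d) := by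
    refine ⟨hx, ?_⟩
    rw [Set.mem_setOf_eq, hv, g_neg, hgx, ← hqk]
    linarith
  have hth := thpair_spec d v q (i + d)
    (edge_th d v q hQ (i + d) (by rw [hv]; exact neg_ne_zero.2 hvi) x hxe)
  obtain ⟨hseg, l, hl, hlv⟩ := hth
  have hT : tlPt d v q (i + d) ∈ edgeOf d v q (i + d) := by
    rw [hseg]; exact left_mem_segment _ _ _
  have hH : hdPt d v q (i + d) ∈ edgeOf d v q (i + d) := by
    rw [hseg]; exact right_mem_segment _ _ _
  rw [hseg] at hxe
  obtain ⟨α, β, hα, hβ, hαβ, hxx⟩ := hxe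
  have hh : hdPt d v q (i + d) = tlPt d v q (i + d) - l • v i := by
    rw [hv] at hlv
    rw [sub_eq_iff_eq_add] at hlv
    rw [hlv]; module
  have ha' : α = 1 - β := by linarith
  subst ha'
  refine ⟨β * l, (1 - β) * l, by positivity, by positivity, ?_, ?_, hT.1, hH.1⟩
  · rw [← hxx, hh]; module
  · rw [← hxx, hh]; module

lemma nondeg_data (d : ℕ) (v : ℤ → Pt) (p : ℤ → ℝ) (i : ℤ)
    (hne : tlPt d v p i ≠ hdPt d v p i) :
    v i ≠ 0 ∧ edgeOf d v p i = segment ℝ (tlPt d v p i) (hdPt d v p i) ∧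
    ∃ s : ℝ, 0 < s ∧ hdPt d v p i - tlPt d v p i = s • v i := by
  obtain ⟨h1, s, hs, hst⟩ := nondeg_spec d v p i hne
  have h0 : s • v i ≠ 0 := by
    rw [← hst]; exact sub_ne_zero.2 hne.symm
  rw [smul_ne_zero_iff] at h0
  exact ⟨h0.2, h1, s, lt_of_le_of_ne hs h0.1.symm, hst⟩

lemma bdry (d : ℕ) (v : ℤ → Pt) (p : ℤ → ℝ) (hP : IsDOP d v p) (C : Set Pt) (hC : IsCompact C)
    (hconv : Convex ℝ C) (hint : (interior C).Nonempty) (hsub : closure (DOPset d v p) ⊆ C)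
    (i : ℤ) (hi : i ∈ Finset.Icc (1 : ℤ) (2 * (d : ℤ)))
    (hne : tlPt d v p i ≠ hdPt d v p i) (x : Pt) (hx : x ∈ relintE d v p i)
    (hxC : x ∈ frontier C) :
    edgeOf d v p i ⊆ frontier C ∧ ∀ y ∈ C, dot2 y (perp2 (v i)) ≤ p i := by
  obtain ⟨hvi, hseg, s, hs, hst⟩ := nondeg_data d v p i hne
  obtain ⟨a, b, ha, hb, hA, hB⟩ := relint_coord d v p i s hs hst x hx
  have hAe : x - a • v i ∈ edgeOf d v p i := by
    rw [hseg, ← hA]; exact left_mem_segment _ _ _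
  have hBe : x + b • v i ∈ edgeOf d v p i := by
    rw [hseg, ← hB]; exact right_mem_segment _ _ _
  have hgx : dot2 x (perp2 (v i)) = p i := by
    have := hAe.2
    rw [Set.mem_setOf_eq, g_sub, g_self] at this
    linarith
  obtain ⟨f, hf0, hf1, hf2⟩ := support C hC hconv hint x (v i) a b ha hb (hsub hAe.1)
    (hsub hBe.1) hxC
  obtain ⟨z, hz⟩ := hP.1
  have hzint : z ∈ interior C :=
    interior_maximal (subset_closure.trans hsub) (dop_open d v p) hz
  obtain ⟨k, hk, hk'⟩ := lemB f (v i) hvi hf0 x z (hf1 z hzint) (by rw [hgx]; exact hz i hi)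
  constructor
  · intro y hy
    refine ⟨subset_closure (hsub hy.1), fun hyi => ?_⟩
    have h1 := hf1 y hyi
    have h2 := hk' y
    rw [hgx, hy.2] at h2
    linarith
  · intro y hy
    have h1 := hf2 y hy
    have h2 := hk' y
    rw [hgx] at h2
    by_contra h
    push Not at h
    nlinarith

lemma touch' (d : ℕ) (v : ℤ → Pt) (hv : ∀ i : ℤ, v (i + (d : ℤ)) = -v i) (p q : ℤ → ℝ)
    (hP : IsDOP d v p) (hQ : IsDOP d v q) (hdis : DOPset d v p ∩ DOPset d v q = ∅)
    (i : ℤ) (hi : i ∈ Finset.Icc (1 : ℤ) (2 * (d : ℤ)))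
    (hne : tlPt d v p i ≠ hdPt d v p i) (x : Pt) (hx : x ∈ relintE d v p i)
    (hxQ : x ∈ frontier (DOPset d v q)) :
    (∀ z ∈ DOPset d v q, p i < dot2 z (perp2 (v i))) ∧
    (¬ SeesOpt d v p q i true → ∃ t s : ℝ, 0 < t ∧ 0 < s ∧
      hdPt d v p i - t • v i ∈ closure (DOPset d v q) ∧
      hdPt d v p i + s • v i ∈ closure (DOPset d v q)) ∧
    (¬ SeesOpt d v p q i false → ∃ t s : ℝ, 0 < t ∧ 0 < s ∧
      tlPt d v p i - t • v i ∈ closure (DOPset d v q) ∧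
      tlPt d v p i + s • v i ∈ closure (DOPset d v q)) := by
  obtain ⟨hvi, hseg, s, hs, hst⟩ := nondeg_data d v p i hne
  obtain ⟨a, b, ha, hb, hA, hB⟩ := relint_coord d v p i s hs hst x hx
  have hAe : x - a • v i ∈ edgeOf d v p i := by
    rw [hseg, ← hA]; exact left_mem_segment _ _ _
  have hBe : x + b • v i ∈ edgeOf d v p i := by
    rw [hseg, ← hB]; exact right_mem_segment _ _ _
  obtain ⟨hside, σ, τ, hσ, hτ, hT, hH, hTc, hHc⟩ := touch d v hv p q hP hQ hdis i hi hvi x a b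
    ha hb hAe hBe hxQ.1
  refine ⟨hside, fun hns => ?_, fun hns => ?_⟩
  · have hlt : b < σ := by
      by_contra h
      push Not at h
      apply hns
      refine ⟨hne, ?_⟩
      simp only [if_true]
      rcases h.eq_or_lt with h | h
      · right
        rw [Set.mem_singleton_iff, hT, hB, h]
      · left
        apply mem_relint d v p i _ hvi (a + σ) (b - σ) (by linarith) (by linarith)
        · rw [hT, hA]; module
        · rw [hT, hB]; module
    refine ⟨b, σ - b, hb, by linarith, ?_, ?_⟩
    · rw [hB, add_sub_cancel_right]; exact hxQ.1
    · have : hdPt d v p i + (σ - b) • v i = tlPt d v q (i + d) := by rw [hB, hT]; module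
      rw [this]; exact hTc
  · have hlt : a < τ := by
      by_contra h
      push Not at h
      apply hns
      refine ⟨hne, ?_⟩
      simp only [Bool.false_eq_true, if_false]
      rcases h.eq_or_lt with h | h
      · right
        rw [Set.mem_singleton_iff, hH, hA, h]
      · left
        apply mem_relint d v p i _ hvi (a - τ) (b + τ) (by linarith) (by linarith)
        · rw [hH, hA]; module
        · rw [hH, hB]; module
    refine ⟨τ - a, a, by linarith, ha, ?_, ?_⟩
    · have : tlPt d v p i - (τ - a) • v i = hdPt d v q (i + d) := by rw [hA, hH]; module
      rw [this]; exact hHc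
    · rw [hA, sub_add_cancel]; exact hxQ.1

/-- The turn at the corner `c` is a strict left turn. -/
lemma turn (d : ℕ) (v : ℤ → Pt) (p : ℤ → ℝ) (hP : IsDOP d v p)
    (i j : ℤ) (hi : i ∈ Finset.Icc (1 : ℤ) (2 * (d : ℤ)))
    (hj : j ∈ Finset.Icc (1 : ℤ) (2 * (d : ℤ)))
    (hie : tlPt d v p i ≠ hdPt d v p i) (hje : tlPt d v p j ≠ hdPt d v p j)
    (hc : hdPt d v p i = tlPt d v p j) : 0 < dot2 (v i) (perp2 (v j)) := by
  obtain ⟨hvi, hsegi, s, hs, hst⟩ := nondeg_data d v p i hie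
  obtain ⟨hvj, hsegj, t, ht, htt⟩ := nondeg_data d v p j hje
  have hci : hdPt d v p i ∈ edgeOf d v p i := by rw [hsegi]; exact right_mem_segment _ _ _
  have hcj : hdPt d v p i ∈ edgeOf d v p j := by rw [hsegj, hc]; exact left_mem_segment _ _ _
  have hbj : hdPt d v p j ∈ edgeOf d v p j := by rw [hsegj]; exact right_mem_segment _ _ _
  set c := hdPt d v p i with hcdef
  have hb : hdPt d v p j = c + t • v j := by rw [hc, ← htt]; abel
  have ha : tlPt d v p i = c - s • v i := by rw [← hst]; abel
  have h1 := dop_cl_le d v p i hi _ hbj.1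
  have hgc : dot2 c (perp2 (v i)) = p i := hci.2
  have hgc' : dot2 c (perp2 (v j)) = p j := hcj.2
  rw [hb, g_add, hgc, g_anti] at h1
  have h2 : 0 ≤ dot2 (v i) (perp2 (v j)) := by
    by_contra h
    push Not at h
    nlinarith
  rcases h2.eq_or_lt with h0 | h0
  swap
  · exact h0
  exfalso
  -- parallel case
  obtain ⟨μ, hμ⟩ : ∃ μ : ℝ, v j = μ • v i := by
    have hN : 0 < (v i).1 ^ 2 + (v i).2 ^ 2 := by
      by_contra h
      apply hvi
      have h1 : (v i).1 = 0 := by nlinarith [sq_nonneg (v i).1, sq_nonneg (v i).2]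
      have h2 : (v i).2 = 0 := by nlinarith [sq_nonneg (v i).1, sq_nonneg (v i).2]
      ext <;> simp [h1, h2]
    simp only [dot2, perp2] at h0
    refine ⟨((v j).1 * (v i).1 + (v j).2 * (v i).2) / ((v i).1 ^ 2 + (v i).2 ^ 2), ?_⟩
    ext
    · simp only [Prod.smul_fst, smul_eq_mul]
      field_simp
      linear_combination (v i).2 * h0
    · simp only [Prod.smul_snd, smul_eq_mul]
      field_simp
      linear_combination - (v i).1 * h0
  have hg : ∀ x, dot2 x (perp2 (v j)) = μ * dot2 x (perp2 (v i)) := by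
    intro x; rw [hμ]; simp [dot2, perp2]; ring
  obtain ⟨z, hz⟩ := hP.1
  have hz1 := hz i hi
  have hz2 := hz j hj
  rw [← hgc', hg, hg, hgc] at hz2
  have hμ0 : 0 < μ := by
    by_contra h
    push Not at h
    nlinarith
  have hbi : hdPt d v p j ∈ edgeOf d v p i := by
    refine ⟨hbj.1, ?_⟩
    rw [Set.mem_setOf_eq, hb, hμ, g_add, hgc]
    have : dot2 (μ • v i) (perp2 (v i)) = 0 := by simp [dot2, perp2]; ring
    rw [this]; ring
  rw [hsegi, hb, ha, hμ] at hbi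
  obtain ⟨α, β, hα, hβ, hαβ, hx⟩ := hbi
  have hα' : β = 1 - α := by linarith
  subst hα'
  have : (t * μ + α * s) • v i = 0 := by
    have h5 : (t * μ + α * s) • v i =
      (c + t • μ • v i) - (α • (c - s • v i) + (1 - α) • c) := by module
    rw [h5, ← hx, sub_self]
  rw [smul_eq_zero] at this
  have hpos : 0 < t * μ + α * s := by positivity
  exact this.elim hpos.ne' hvi

/-- Let `P ∈ OPT` and `c` a point with `c = h(e) = t(e')` for two
non-degenerate edges `e = e_i(P)`, `e' = e_j(P)` with `i ≠ j`. If `e ⊄ ∂C*` or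
`e' ⊄ ∂C*`, then `P` is accountable w.r.t. `(v_i, h)` or w.r.t. `(v_j, t)`. -/
theorem stmt4 (d : ℕ) (v : ℤ → Pt) (hv : DirOK d v)
    (Cstar : Set Pt) (hCcomp : IsCompact Cstar) (hCconv : Convex ℝ Cstar)
    (hCint : (interior Cstar).Nonempty)
    (OPT : Set (ℤ → ℝ)) (hDOP : ∀ p ∈ OPT, IsDOP d v p) (hind : Indep d v OPT)
    (hsub : ∀ p ∈ OPT, closure (DOPset d v p) ⊆ Cstar)
    (hE4 : E4cond d v OPT Cstar)
    (p : ℤ → ℝ) (hp : p ∈ OPT)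
    (i j : ℤ) (hi : i ∈ Finset.Icc (1 : ℤ) (2 * (d : ℤ)))
    (hj : j ∈ Finset.Icc (1 : ℤ) (2 * (d : ℤ))) (hij : i ≠ j)
    (hie : tlPt d v p i ≠ hdPt d v p i) (hje : tlPt d v p j ≠ hdPt d v p j)
    (c : Pt) (hch : c = hdPt d v p i) (hct : c = tlPt d v p j)
    (hnb : ¬ edgeOf d v p i ⊆ frontier Cstar ∨ ¬ edgeOf d v p j ⊆ frontier Cstar) :
    Accountable d v OPT p i true ∨ Accountable d v OPT p j false := by
  have hvd : ∀ i : ℤ, v (i + (d : ℤ)) = -v i := hv.2.2.1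
  have hP := hDOP p hp
  have hcc : hdPt d v p i = tlPt d v p j := hch.symm.trans hct
  have hcr := turn d v p hP i j hi hj hie hje hcc
  have hcr' : dot2 (v j) (perp2 (v i)) < 0 := by rw [g_anti]; linarith
  obtain ⟨hvi, hsegi, -⟩ := nondeg_data d v p i hie
  obtain ⟨hvj, hsegj, -⟩ := nondeg_data d v p j hje
  have hgi : dot2 c (perp2 (v i)) = p i := by
    have : hdPt d v p i ∈ edgeOf d v p i := by rw [hsegi]; exact right_mem_segment _ _ _
    rw [hch]; exact this.2
  have hgj : dot2 c (perp2 (v j)) = p j := by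
    have : tlPt d v p j ∈ edgeOf d v p j := by rw [hsegj]; exact left_mem_segment _ _ _
    rw [hct]; exact this.2
  have hdisj : ∀ q ∈ OPT, DOPset d v q ≠ DOPset d v p → DOPset d v p ∩ DOPset d v q = ∅ := by
    intro q hq hne
    exact (hind p hp q hq (by rintro rfl; exact hne rfl)).2
  by_contra hcon
  rw [not_or] at hcon
  obtain ⟨hn1, hn2⟩ := hcon
  rcases hE4 p hp i hi hie with ⟨q, hq, hqne, x, hx, hxq⟩ | ⟨x, hx, hxC⟩
  · obtain ⟨hside, hhead, -⟩ := touch' d v hvd p q hP (hDOP q hq) (hdisj q hq hqne) i hi hie x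
      hx hxq
    obtain ⟨t, s, ht, hs, hq1, hq2⟩ := hhead (fun h => hn1 ⟨q, hq, h⟩)
    rw [← hch] at hq1 hq2
    rcases hE4 p hp j hj hje with ⟨r, hr, hrne, y, hy, hyr⟩ | ⟨y, hy, hyC⟩
    · obtain ⟨hside', -, htail⟩ := touch' d v hvd p r hP (hDOP r hr) (hdisj r hr hrne) j hj hje y
        hy hyr
      obtain ⟨t', s', ht', hs', hr1, hr2⟩ := htail (fun h => hn2 ⟨r, hr, h⟩)
      rw [← hct] at hr1 hr2
      by_cases hqr : q = r
      · subst hqr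
        have := cl_ge _ _ _ hside _ hr2
        rw [g_add, hgi] at this
        nlinarith
      · have hd := (hind q hq r hr hqr).2
        have hcr : c ∈ closure (DOPset d v r) := by
          refine (dop_convex d v r).closure.segment_subset hr1 hr2
            ⟨s' / (t' + s'), t' / (t' + s'), by positivity, by positivity, by field_simp; ring, ?_⟩
          have e : s' / (t' + s') + t' / (t' + s') = 1 := by field_simp; ring
          have e2 : t' / (t' + s') * s' - s' / (t' + s') * t' = 0 := by field_simp; ring
          calc _ = (s' / (t' + s') + t' / (t' + s')) • c
                + (t' / (t' + s') * s' - s' / (t' + s') * t') • v j := by module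
            _ = c := by rw [e, e2]; simp
        have hA := lemA _ _ (dop_open d v q) (dop_convex d v q) (hDOP q hq).1 (dop_open d v r)
          (dop_convex d v r) hd (-v i) (neg_ne_zero.2 hvi) c s t hs ht
          (by rw [smul_neg, sub_neg_eq_add]; exact hq2)
          (by rw [smul_neg, ← sub_eq_add_neg]; exact hq1) hcr
          (fun z hz => by rw [g_neg, g_neg, hgi]; linarith [hside z hz])
        have := cl_ge _ _ _ hA _ hr1
        rw [g_neg, g_neg, g_sub] at this
        nlinarith
    · have hb := (bdry d v p hP Cstar hCcomp hCconv hCint (hsub p hp) j hj hje y hy hyC).2 _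
        (hsub q hq hq2)
      rw [g_add, hgj] at hb
      nlinarith
  · obtain ⟨hb1, hb2⟩ := bdry d v p hP Cstar hCcomp hCconv hCint (hsub p hp) i hi hie x hx hxC
    rcases hE4 p hp j hj hje with ⟨r, hr, hrne, y, hy, hyr⟩ | ⟨y, hy, hyC⟩
    · obtain ⟨hside', -, htail⟩ := touch' d v hvd p r hP (hDOP r hr) (hdisj r hr hrne) j hj hje y
        hy hyr
      obtain ⟨t', s', ht', hs', hr1, hr2⟩ := htail (fun h => hn2 ⟨r, hr, h⟩)
      rw [← hct] at hr1 hr2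
      have := hb2 _ (hsub r hr hr1)
      rw [g_sub, hgi] at this
      nlinarith
    · have hb3 := (bdry d v p hP Cstar hCcomp hCconv hCint (hsub p hp) j hj hje y hy hyC).1
      exact hnb.elim (fun h => h hb1) (fun h => h hb3)
end
end
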